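/- arXiv:2409.14148 — 2 statements merged into one kernel-verified Lean document; each statement's English description precedes it below -/
import Mathlib

section
/- Let M, Y_1,…,Y_n, Z_1,…,Z_n be random variables with values in finite sets, jointly distributed according to pmfs P and Q, and suppose D(P_{M Y^i Z_{i+1}^n} ‖ Q_{M Y^i Z_{i+1}^n}) < ∞ for every 0 ≤ i ≤ n (where Y^i = (Y_1,…,Y_i) and Z_{i+1}^n = (Z_{i+1},…,Z_n)). Setting U_i := (M, Y^{i−1}, Z_{i+1}^n), it holds that D(P_{M Y^n} ‖ Q_{M Y^n}) − D(P_{M Z^n} ‖ Q_{M Z^n}) = ∑_{i=1}^n [ D(P_{U_i Y_i} ‖ Q_{U_i Y_i}) − D(P_{U_i Z_i} ‖ Q_{U_i Z_i}) ]. -/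
open scoped BigOperators

noncomputable section

open Classical in
/-- Pushforward of a finitely supported mass function along a map. -/
def pushf {Ω α : Type*} [Fintype Ω] (p : Ω → ℝ) (f : Ω → α) : α → ℝ :=
  fun a => ∑ ω, if f ω = a then p ω else 0

/-- `p` is a probability mass function. -/
def IsPMF {α : Type*} [Fintype α] (p : α → ℝ) : Prop :=
  (∀ a, 0 ≤ p a) ∧ ∑ a, p a = 1

/-- Kullback–Leibler divergence `D(p‖q)` of mass functions, valued in `EReal`
(equal to `⊤` if `p` is not absolutely continuous w.r.t. `q`). -/
def klDiv {α : Type*} [Fintype α] (p q : α → ℝ) : EReal :=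
  if ∀ a, q a = 0 → p a = 0 then ((∑ a, p a * Real.log (p a / q a) : ℝ) : EReal) else ⊤

/-- Shannon entropy. -/
def entropy {α : Type*} [Fintype α] (p : α → ℝ) : ℝ :=
  -∑ a, p a * Real.log (p a)

/-- Conditional mutual information `I(A;B|C)` under the mass function `p`. -/
def condMI {Ω α β γ : Type*} [Fintype Ω] [Fintype α] [Fintype β] [Fintype γ]
    (p : Ω → ℝ) (A : Ω → α) (B : Ω → β) (C : Ω → γ) : ℝ :=
  entropy (pushf p (fun ω => (A ω, C ω))) + entropy (pushf p (fun ω => (B ω, C ω)))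
    - entropy (pushf p (fun ω => (A ω, B ω, C ω))) - entropy (pushf p C)

/-- First marginal of a joint mass function. -/
def margFst {α β : Type*} [Fintype α] [Fintype β] (p : α × β → ℝ) : α → ℝ :=
  fun a => ∑ b, p (a, b)

/-- Conditional mass function of the second coordinate given the first. -/
def condSnd {α β : Type*} [Fintype α] [Fintype β] (p : α × β → ℝ) : α → β → ℝ :=
  fun a b => p (a, b) / margFst p a

/-- Output distribution of a channel on an input distribution. -/
def outDist {α β : Type*} [Fintype α] [Fintype β] (ch : α → β → ℝ) (pa : α → ℝ) : β → ℝ :=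
  fun b => ∑ a, pa a * ch a b

/-- The difference functional
`f(P'_X) = sup_{Q̂_X ≪ Q_X} D(P'_Y‖Q̂_Y) − D(P'_Z‖Q̂_Z)`. -/
def fdiff {X Y Z : Type*} [Fintype X] [Fintype Y] [Fintype Z]
    (pYgX : X → Y → ℝ) (pZgX : X → Z → ℝ) (qYgX : X → Y → ℝ) (qZgX : X → Z → ℝ)
    (qX : X → ℝ) (pX' : X → ℝ) : EReal :=
  sSup {d : EReal | ∃ qhX : X → ℝ, IsPMF qhX ∧ (∀ x, qX x = 0 → qhX x = 0) ∧
    d = klDiv (outDist pYgX pX') (outDist qYgX qhX)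
        - klDiv (outDist pZgX pX') (outDist qZgX qhX)}

/-- The quantity `G_{P_XY, Q_XY, P_XZ, Q_XZ}(R)`: the supremum over finite sets `𝒰`
(represented by `Fin m`) and channels `P_{U|X}` with `I_P(U;X|Y) ≤ R` and `I_P(U;X|Z) ≤ R`
of `∑_u P_U(u) f(P_{X|U}(·|u))`. -/
def Gexp {X Y Z : Type*} [Fintype X] [Fintype Y] [Fintype Z]
    (pXY : X × Y → ℝ) (qXY : X × Y → ℝ) (pXZ : X × Z → ℝ) (qXZ : X × Z → ℝ)
    (R : ℝ) : EReal :=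
  sSup {v : EReal | ∃ (m : ℕ) (ch : X → Fin m → ℝ),
    (∀ x, IsPMF (ch x)) ∧
    condMI (fun w : Fin m × X × Y => ch w.2.1 w.1 * pXY (w.2.1, w.2.2))
      (fun w => w.1) (fun w => w.2.1) (fun w => w.2.2) ≤ R ∧
    condMI (fun w : Fin m × X × Z => ch w.2.1 w.1 * pXZ (w.2.1, w.2.2))
      (fun w => w.1) (fun w => w.2.1) (fun w => w.2.2) ≤ R ∧
    v = ∑ u : Fin m,
      ((∑ x, ch x u * margFst pXY x : ℝ) : EReal) *
        fdiff (condSnd pXY) (condSnd pXZ) (condSnd qXY) (condSnd qXZ)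
          (margFst qXY)
          (fun x => ch x u * margFst pXY x / ∑ x', ch x' u * margFst pXY x')}

/-- The error exponent of distributed hypothesis testing, via the Ahlswede–Csiszár
multi-letter characterization. -/
def errExp {X W : Type*} [Fintype X] [Fintype W]
    (pXW qXW : X × W → ℝ) (R : ℝ) : EReal :=
  sSup {v : EReal | ∃ n : ℕ, 0 < n ∧
    ∃ κ : (Fin n → X) → Fin (2 ^ ⌊(n : ℝ) * R⌋₊) → ℝ,
      (∀ x, IsPMF (κ x)) ∧
      v = (((n : ℝ)⁻¹ : ℝ) : EReal) *
        klDiv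
          (fun mw : Fin (2 ^ ⌊(n : ℝ) * R⌋₊) × (Fin n → W) =>
            ∑ x : Fin n → X, (∏ i, pXW (x i, mw.2 i)) * κ x mw.1)
          (fun mw : Fin (2 ^ ⌊(n : ℝ) * R⌋₊) × (Fin n → W) =>
            ∑ x : Fin n → X, (∏ i, qXW (x i, mw.2 i)) * κ x mw.1)}

lemma pushf_kernel {Ω α β : Type*} [Fintype Ω] (p : Ω → ℝ) (f : Ω → α) (g : Ω → β)
    (h : ∀ w w', f w = f w' ↔ g w = g w') (w : Ω) :
    pushf p f (f w) = pushf p g (g w) := by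
  unfold pushf
  refine Finset.sum_congr rfl fun x _ => ?_
  by_cases hx : f x = f w
  · rw [if_pos hx, if_pos ((h x w).1 hx)]
  · rw [if_neg hx, if_neg (fun h2 => hx ((h x w).2 h2))]

lemma pushf_eq_zero {Ω α : Type*} [Fintype Ω] (p : Ω → ℝ) (f : Ω → α) (a : α)
    (h : ∀ w, f w ≠ a) : pushf p f a = 0 := by
  unfold pushf
  exact Finset.sum_eq_zero fun x _ => if_neg (h x)

lemma sum_pushf_mul {Ω α : Type*} [Fintype Ω] [Fintype α] (p : Ω → ℝ) (f : Ω → α) (F : α → ℝ) :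
    ∑ a, pushf p f a * F a = ∑ w, p w * F (f w) := by
  classical
  unfold pushf
  simp only [Finset.sum_mul]
  rw [Finset.sum_comm]
  refine Finset.sum_congr rfl fun x _ => ?_
  simp [ite_mul]

lemma klDiv_pushf {Ω α : Type*} [Fintype Ω] [Fintype α] (p q : Ω → ℝ) (f : Ω → α) :
    klDiv (pushf p f) (pushf q f) =
      (open Classical in
      if ∀ w, pushf q f (f w) = 0 → pushf p f (f w) = 0 then
        ((∑ w, p w * Real.log (pushf p f (f w) / pushf q f (f w)) : ℝ) : EReal) else ⊤) := by
  classical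
  have hc : (∀ a, pushf q f a = 0 → pushf p f a = 0) ↔
      ∀ w, pushf q f (f w) = 0 → pushf p f (f w) = 0 := by
    refine ⟨fun h w => h _, fun h a => ?_⟩
    by_cases ha : ∃ w, f w = a
    · obtain ⟨w, rfl⟩ := ha
      exact h w
    · push Not at ha
      exact fun _ => pushf_eq_zero p f a ha
  unfold klDiv
  rw [sum_pushf_mul p f (fun a => Real.log (pushf p f a / pushf q f a))]
  simp only [hc]

lemma klDiv_kernel {Ω α β : Type*} [Fintype Ω] [Fintype α] [Fintype β] (p q : Ω → ℝ)
    (f : Ω → α) (g : Ω → β) (h : ∀ w w', f w = f w' ↔ g w = g w') :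
    klDiv (pushf p f) (pushf q f) = klDiv (pushf p g) (pushf q g) := by
  rw [klDiv_pushf, klDiv_pushf]
  simp only [pushf_kernel p f g h, pushf_kernel q f g h]

lemma klDiv_ne_bot {α : Type*} [Fintype α] (p q : α → ℝ) : klDiv p q ≠ ⊥ := by
  unfold klDiv
  split_ifs
  · exact EReal.coe_ne_bot _
  · exact top_ne_bot

lemma telescope_ereal (n : ℕ) (A : ℕ → EReal) (hb : ∀ i, A i ≠ ⊥) (ht : ∀ i ≤ n, A i ≠ ⊤) :
    A n - A 0 = ∑ i : Fin n, (A (i + 1) - A i) := by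
  have hA : ∀ i ≤ n, A i = ((A i).toReal : EReal) := fun i hi =>
    (EReal.coe_toReal (ht i hi) (hb i)).symm
  have : ∀ i : Fin n, A (i + 1) - A i =
      (((A (i + 1)).toReal - (A i).toReal : ℝ) : EReal) := fun i => by
    rw [EReal.coe_sub, ← hA _ (by omega), ← hA _ (by omega)]
  simp only [this]
  rw [hA n le_rfl, hA 0 (by omega), ← EReal.coe_sub]
  have h2 := Finset.sum_range_sub (fun i => (A i).toReal) n
  rw [← h2, ← Fin.sum_univ_eq_sum_range (fun i => (A (i+1)).toReal - (A i).toReal) n]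
  exact map_sum (⟨⟨fun x : ℝ => (x : EReal), EReal.coe_zero⟩, EReal.coe_add⟩ : ℝ →+ EReal) _ _

/-- Telescoping identity: with `U_i = (M, Y^{i-1}, Z_{i+1}^n)`,
`D(P_{MY^n}‖Q_{MY^n}) − D(P_{MZ^n}‖Q_{MZ^n})
  = ∑_i [D(P_{U_iY_i}‖Q_{U_iY_i}) − D(P_{U_iZ_i}‖Q_{U_iZ_i})]`,
provided all the hybrid divergences `D(P_{MY^iZ_{i+1}^n}‖Q_{MY^iZ_{i+1}^n})` are finite. -/
theorem telescoping_klDiv {M Y Z : Type*} [Fintype M] [Fintype Y] [Fintype Z] (n : ℕ)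
    (P Q : M × (Fin n → Y) × (Fin n → Z) → ℝ) (hP : IsPMF P) (hQ : IsPMF Q)
    (hfin : ∀ i : ℕ, i ≤ n →
      klDiv
        (pushf P (fun w => (w.1, fun j : {j : Fin n // (j : ℕ) < i} => w.2.1 j.1,
          fun j : {j : Fin n // i ≤ (j : ℕ)} => w.2.2 j.1)))
        (pushf Q (fun w => (w.1, fun j : {j : Fin n // (j : ℕ) < i} => w.2.1 j.1,
          fun j : {j : Fin n // i ≤ (j : ℕ)} => w.2.2 j.1))) < ⊤) :
    klDiv (pushf P (fun w => (w.1, w.2.1))) (pushf Q (fun w => (w.1, w.2.1)))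
      - klDiv (pushf P (fun w => (w.1, w.2.2))) (pushf Q (fun w => (w.1, w.2.2)))
    = ∑ i : Fin n,
        (klDiv
            (pushf P (fun w => ((w.1, fun j : {j : Fin n // (j : ℕ) < (i : ℕ)} => w.2.1 j.1,
              fun j : {j : Fin n // (i : ℕ) < (j : ℕ)} => w.2.2 j.1), w.2.1 i)))
            (pushf Q (fun w => ((w.1, fun j : {j : Fin n // (j : ℕ) < (i : ℕ)} => w.2.1 j.1,
              fun j : {j : Fin n // (i : ℕ) < (j : ℕ)} => w.2.2 j.1), w.2.1 i)))
          - klDiv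
            (pushf P (fun w => ((w.1, fun j : {j : Fin n // (j : ℕ) < (i : ℕ)} => w.2.1 j.1,
              fun j : {j : Fin n // (i : ℕ) < (j : ℕ)} => w.2.2 j.1), w.2.2 i)))
            (pushf Q (fun w => ((w.1, fun j : {j : Fin n // (j : ℕ) < (i : ℕ)} => w.2.1 j.1,
              fun j : {j : Fin n // (i : ℕ) < (j : ℕ)} => w.2.2 j.1), w.2.2 i)))) := by
  have key := telescope_ereal n (fun i => klDiv
        (pushf P (fun w => (w.1, fun j : {j : Fin n // (j : ℕ) < i} => w.2.1 j.1,
          fun j : {j : Fin n // i ≤ (j : ℕ)} => w.2.2 j.1)))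
        (pushf Q (fun w => (w.1, fun j : {j : Fin n // (j : ℕ) < i} => w.2.1 j.1,
          fun j : {j : Fin n // i ≤ (j : ℕ)} => w.2.2 j.1))))
    (fun i => klDiv_ne_bot _ _) (fun i hi => (hfin i hi).ne)
  refine Eq.trans ?_ (key.trans ?_)
  · congr 1
    · refine klDiv_kernel _ _ _ _ fun w w' => ?_
      simp only [Prod.mk.injEq, funext_iff, Subtype.forall]
      refine and_congr_right fun _ => ⟨fun h => ⟨fun j _ => h j, fun j hj => ?_⟩,
        fun h j => h.1 j j.2⟩
      omega
    · refine klDiv_kernel _ _ _ _ fun w w' => ?_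
      simp only [Prod.mk.injEq, funext_iff, Subtype.forall]
      refine and_congr_right fun _ => ⟨fun h => ⟨fun j hj => ?_, fun j _ => h j⟩,
        fun h j => h.2 j (Nat.zero_le _)⟩
      omega
  · refine Finset.sum_congr rfl fun i _ => ?_
    congr 1
    · refine klDiv_kernel _ _ _ _ fun w w' => ?_
      simp only [Prod.mk.injEq, funext_iff, Subtype.forall]
      constructor
      · rintro ⟨h1, h2, h3⟩
        exact ⟨⟨h1, fun j hj => h2 j (by omega), fun j hj => h3 j (by omega)⟩, h2 i (by omega)⟩
      · rintro ⟨⟨h1, h2, h3⟩, h4⟩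
        refine ⟨h1, fun j hj => ?_, fun j hj => h3 j (by omega)⟩
        rcases Nat.lt_succ_iff_lt_or_eq.1 hj with h | h
        · exact h2 j h
        · rw [Fin.ext h]; exact h4
    · refine klDiv_kernel _ _ _ _ fun w w' => ?_
      simp only [Prod.mk.injEq, funext_iff, Subtype.forall]
      constructor
      · rintro ⟨h1, h2, h3⟩
        exact ⟨⟨h1, fun j hj => h2 j (by omega), fun j hj => h3 j (by omega)⟩, h3 i (by omega)⟩
      · rintro ⟨⟨h1, h2, h3⟩, h4⟩
        refine ⟨h1, fun j hj => h2 j (by omega), fun j hj => ?_⟩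
        rcases Nat.lt_or_eq_of_le hj with h | h
        · exact h3 j h
        · rw [← Fin.ext h]; exact h4

end
end

section
/- Let 𝒳, 𝒴, 𝒵_1, …, 𝒵_k be finite sets and R > 0. Let P_{XY}, Q_{XY} and P_{XZ_j}, Q_{XZ_j} (1 ≤ j ≤ k) be pmfs with common 𝒳-marginals P_X and Q_X respectively, such that D(P_{XY}‖Q_{XY}) < ∞ and D(P_{XZ_j}‖Q_{XZ_j}) < ∞ for all j. Then E_{P_{XY},Q_{XY}}(R) ≤ G_{P_{XY},Q_{XY},P_{XZ_1},Q_{XZ_1}}(R) + ∑_{j=1}^{k−1} G_{P_{XZ_j},Q_{XZ_j},P_{XZ_{j+1}},Q_{XZ_{j+1}}}(R) + E_{P_{XZ_k},Q_{XZ_k}}(R). -/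
open scoped BigOperators

noncomputable section

set_option linter.unusedSectionVars false
set_option linter.unusedVariables false
section helpers

open Finset

variable {A B C A₁ A₂ B₁ B₂ C₁ C₂ X Y Z : Type*} [Fintype A] [Fintype B] [Fintype C]
  [Fintype A₁] [Fintype A₂] [Fintype B₁] [Fintype B₂] [Fintype C₁] [Fintype C₂]
  [Fintype X] [Fintype Y] [Fintype Z]

def TT (p : A × B → ℝ) (g : A → ℝ) (b : B) : ℝ := ∑ a, p (a, b) * g a

def DD (p q : A × B → ℝ) (g h : A → ℝ) : ℝ :=
  ∑ b, TT p g b * Real.log (TT p g b / TT q h b)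

def JJ (p : A × B → ℝ) (g : A → ℝ) : ℝ :=
  ∑ a, ∑ b, p (a, b) * g a * Real.log (g a * TT p (fun _ => 1) b / TT p g b)

def prodS (p₁ : A₁ × B₁ → ℝ) (p₂ : A₂ × B₂ → ℝ) : (A₁ × A₂) × (B₁ × B₂) → ℝ :=
  fun w => p₁ (w.1.1, w.2.1) * p₂ (w.1.2, w.2.2)

lemma TT_nonneg {p : A × B → ℝ} {g : A → ℝ} (hp : ∀ w, 0 ≤ p w) (hg : ∀ a, 0 ≤ g a) (b : B) :
    0 ≤ TT p g b := Finset.sum_nonneg fun a _ => mul_nonneg (hp _) (hg _)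

lemma TT_pos {p : A × B → ℝ} {g : A → ℝ} (hp : ∀ w, 0 ≤ p w) (hg : ∀ a, 0 ≤ g a) {a : A} {b : B}
    (h : p (a, b) * g a ≠ 0) : 0 < TT p g b :=
  lt_of_lt_of_le (lt_of_le_of_ne (mul_nonneg (hp _) (hg _)) (Ne.symm h))
    (Finset.single_le_sum (f := fun a => p (a, b) * g a)
      (fun a _ => mul_nonneg (hp _) (hg _)) (Finset.mem_univ a))

lemma TT_one_pos {p : A × B → ℝ} (hp : ∀ w, 0 ≤ p w) {a : A} {b : B}
    (h : p (a, b) ≠ 0) : 0 < TT p (fun _ => 1) b :=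
  TT_pos hp (fun _ => zero_le_one) (a := a) (by simpa using h)

lemma TT_ac {p q : A × B → ℝ} {g h : A → ℝ} (hq : ∀ w, 0 ≤ q w)
    (hh : ∀ a, 0 ≤ h a) (hpq : ∀ w, q w = 0 → p w = 0) (hgh : ∀ a, h a = 0 → g a = 0) (b : B)
    (h0 : TT q h b = 0) : TT p g b = 0 := by
  unfold TT at *
  rw [Finset.sum_eq_zero_iff_of_nonneg (fun a _ => mul_nonneg (hq _) (hh _))] at h0
  refine Finset.sum_eq_zero fun a ha => ?_
  rcases mul_eq_zero.1 (h0 a ha) with h | h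
  · rw [hpq _ h, zero_mul]
  · rw [hgh _ h, mul_zero]

lemma log_sum {ι : Type*} [Fintype ι] (a b : ι → ℝ) (t : ℝ) (ht : 0 < t) (ha : ∀ i, 0 ≤ a i)
    (hb : ∀ i, 0 ≤ b i) (hab : ∀ i, b i = 0 → a i = 0) :
    (∑ i, a i) * Real.log ((∑ i, a i) * t / ∑ i, b i) ≤ ∑ i, a i * Real.log (a i * t / b i) := by
  by_cases hA : ∑ i, a i = 0
  · rw [hA, zero_mul]
    rw [Finset.sum_eq_zero_iff_of_nonneg (fun i _ => ha i)] at hA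
    rw [Finset.sum_eq_zero]
    intro i hi
    rw [hA i hi, zero_mul]
  have hA' : 0 < ∑ i, a i := lt_of_le_of_ne (Finset.sum_nonneg fun i _ => ha i) (Ne.symm hA)
  have hB' : 0 < ∑ i, b i := by
    refine lt_of_le_of_ne (Finset.sum_nonneg fun i _ => hb i) (fun h => hA ?_)
    have h := h.symm
    rw [Finset.sum_eq_zero_iff_of_nonneg (fun i _ => hb i)] at h
    exact Finset.sum_eq_zero fun i hi => hab i (h i hi)
  generalize hAA : ∑ i, a i = S at *
  generalize hBB : ∑ i, b i = T at *
  have key : ∀ i, a i * Real.log (S * t / T) + (a i - b i * (S / T)) ≤ a i * Real.log (a i * t / b i) := by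
    intro i
    by_cases h0 : a i = 0
    · have : 0 ≤ b i * (S / T) := mul_nonneg (hb i) (by positivity)
      rw [h0]; simp; exact this
    have hai : 0 < a i := lt_of_le_of_ne (ha i) (Ne.symm h0)
    have hbi : 0 < b i := lt_of_le_of_ne (hb i) (fun h => h0 (hab i h.symm))
    have h1 := Real.log_le_sub_one_of_pos (x := (S * t / T) / (a i * t / b i)) (by positivity)
    rw [Real.log_div (by positivity) (by positivity)] at h1
    have h2 : (S * t / T) / (a i * t / b i) = b i * (S / T) / a i := by field_simp
    rw [h2] at h1
    have h3 := mul_le_mul_of_nonneg_left h1 hai.le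
    have h4 : a i * (b i * (S / T) / a i - 1) = b i * (S / T) - a i := by field_simp
    rw [h4] at h3
    linarith
  have := Finset.sum_le_sum fun i (_ : i ∈ Finset.univ) => key i
  rw [Finset.sum_add_distrib, Finset.sum_sub_distrib, ← Finset.sum_mul, ← Finset.sum_mul, hAA, hBB,
    mul_div_cancel₀ _ hB'.ne'] at this
  linarith

lemma TT_sum {ι : Type*} [Fintype ι] (p : A × B → ℝ) (c : ι → ℝ) (g : ι → A → ℝ) (b : B) :
    TT p (fun a => ∑ i, c i * g i a) b = ∑ i, c i * TT p (g i) b := by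
  unfold TT
  simp_rw [Finset.mul_sum]
  rw [Finset.sum_comm]
  refine Finset.sum_congr rfl fun i _ => Finset.sum_congr rfl fun a _ => by ring

lemma JJ_subadd {ι : Type*} [Fintype ι] (p : A × B → ℝ) (hp : ∀ w, 0 ≤ p w) (c : ι → ℝ)
    (hc : ∀ i, 0 ≤ c i) (g : ι → A → ℝ) (hg : ∀ i a, 0 ≤ g i a) :
    JJ p (fun a => ∑ i, c i * g i a) ≤ ∑ i, c i * JJ p (g i) := by
  have : ∑ i, c i * JJ p (g i) = ∑ a, ∑ b, ∑ i, c i * (p (a, b) * g i a *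
      Real.log (g i a * TT p (fun _ => 1) b / TT p (g i) b)) := by
    unfold JJ
    simp_rw [Finset.mul_sum]
    rw [Finset.sum_comm]
    refine Finset.sum_congr rfl fun a _ => ?_
    rw [Finset.sum_comm]
  rw [this]
  unfold JJ
  refine Finset.sum_le_sum fun a _ => Finset.sum_le_sum fun b _ => ?_
  by_cases h0 : p (a, b) = 0
  · simp [h0]
  have hpp : 0 < p (a, b) := lt_of_le_of_ne (hp _) (Ne.symm h0)
  have h1 := log_sum (fun i => c i * g i a) (fun i => c i * TT p (g i) b)
    (TT p (fun _ => 1) b) (TT_one_pos hp h0) (fun i => mul_nonneg (hc i) (hg i a))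
    (fun i => mul_nonneg (hc i) (TT_nonneg hp (hg i) b)) (by
      intro i h
      rcases mul_eq_zero.1 h with h | h
      · simp [h]
      · by_contra h'
        have hgi : g i a ≠ 0 := fun h2 => h' (by simp [h2])
        exact (TT_pos hp (hg i) (mul_ne_zero h0 hgi)).ne' h)
  have h2 := mul_le_mul_of_nonneg_left h1 hpp.le
  rw [TT_sum, mul_assoc]
  refine h2.trans (le_of_eq ?_)
  rw [Finset.mul_sum]
  refine Finset.sum_congr rfl fun i _ => ?_
  by_cases hci : c i = 0
  · simp [hci]
  rw [show c i * g i a * TT p (fun _ => 1) b / (c i * TT p (g i) b)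
    = g i a * TT p (fun _ => 1) b / TT p (g i) b by
      rw [mul_assoc, mul_div_mul_left _ _ hci]]
  ring

lemma TT_prodS (p₁ : A₁ × B₁ → ℝ) (p₂ : A₂ × B₂ → ℝ) (g : A₁ × A₂ → ℝ) (b : B₁ × B₂) :
    TT (prodS p₁ p₂) g b = TT p₁ (fun a₁ => TT p₂ (fun a₂ => g (a₁, a₂)) b.2) b.1 := by
  unfold TT prodS
  rw [Fintype.sum_prod_type]
  simp_rw [Finset.mul_sum]
  refine Finset.sum_congr rfl fun i _ => Finset.sum_congr rfl fun a _ => by ring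

lemma TT_prodS' (p₁ : A₁ × B₁ → ℝ) (p₂ : A₂ × B₂ → ℝ) (g : A₁ × A₂ → ℝ) (b : B₁ × B₂) :
    TT (prodS p₁ p₂) g b = TT p₂ (fun a₂ => TT p₁ (fun a₁ => g (a₁, a₂)) b.1) b.2 := by
  unfold TT prodS
  rw [Fintype.sum_prod_type_right]
  simp_rw [Finset.mul_sum]
  refine Finset.sum_congr rfl fun i _ => Finset.sum_congr rfl fun a _ => by ring

lemma TT_prodS_one (p₁ : A₁ × B₁ → ℝ) (p₂ : A₂ × B₂ → ℝ) (b : B₁ × B₂) :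
    TT (prodS p₁ p₂) (fun _ => 1) b = TT p₁ (fun _ => 1) b.1 * TT p₂ (fun _ => 1) b.2 := by
  rw [TT_prodS]; unfold TT; rw [Finset.sum_mul]
  simp

lemma DD_prodS (p₁ q₁ : A₁ × B₁ → ℝ) (p₂ q₂ : A₂ × B₂ → ℝ) (g h : A₁ × A₂ → ℝ) :
    DD (prodS p₁ p₂) (prodS q₁ q₂) g h = ∑ b₂, DD p₁ q₁ (fun a₁ => TT p₂ (fun a₂ => g (a₁, a₂)) b₂)
      (fun a₁ => TT q₂ (fun a₂ => h (a₁, a₂)) b₂) := by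
  unfold DD
  rw [Fintype.sum_prod_type_right]
  simp_rw [TT_prodS]

lemma DD_prodS' (p₁ q₁ : A₁ × B₁ → ℝ) (p₂ q₂ : A₂ × B₂ → ℝ) (g h : A₁ × A₂ → ℝ) :
    DD (prodS p₁ p₂) (prodS q₁ q₂) g h = ∑ b₁, DD p₂ q₂ (fun a₂ => TT p₁ (fun a₁ => g (a₁, a₂)) b₁)
      (fun a₂ => TT q₁ (fun a₁ => h (a₁, a₂)) b₁) := by
  unfold DD
  rw [Fintype.sum_prod_type]
  simp_rw [TT_prodS']

lemma JJ_chain (p₁ : A₁ × B₁ → ℝ) (p₂ : A₂ × B₂ → ℝ) (hp₁ : ∀ w, 0 ≤ p₁ w) (hp₂ : ∀ w, 0 ≤ p₂ w)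
    (g : A₁ × A₂ → ℝ) (hg : ∀ a, 0 ≤ g a) :
    JJ (prodS p₁ p₂) g = ∑ a₁, margFst p₁ a₁ * JJ p₂ (fun a₂ => g (a₁, a₂)) +
      ∑ b₂, JJ p₁ (fun a₁ => TT p₂ (fun a₂ => g (a₁, a₂)) b₂) := by
  have e1 : ∑ a₁, margFst p₁ a₁ * JJ p₂ (fun a₂ => g (a₁, a₂)) =
      ∑ a₁, ∑ a₂, ∑ b₁, ∑ b₂, p₁ (a₁, b₁) * (p₂ (a₂, b₂) * g (a₁, a₂) *
        Real.log (g (a₁, a₂) * TT p₂ (fun _ => 1) b₂ / TT p₂ (fun a₂ => g (a₁, a₂)) b₂)) := by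
    refine Finset.sum_congr rfl fun a₁ _ => ?_
    unfold margFst JJ
    rw [Finset.mul_sum]
    refine Finset.sum_congr rfl fun a₂ _ => ?_
    rw [Finset.sum_mul_sum]
  have e2 : ∑ b₂, JJ p₁ (fun a₁ => TT p₂ (fun a₂ => g (a₁, a₂)) b₂) =
      ∑ a₁, ∑ a₂, ∑ b₁, ∑ b₂, p₁ (a₁, b₁) * (p₂ (a₂, b₂) * g (a₁, a₂)) *
        Real.log (TT p₂ (fun a₂ => g (a₁, a₂)) b₂ * TT p₁ (fun _ => 1) b₁ /
          TT p₁ (fun a₁ => TT p₂ (fun a₂ => g (a₁, a₂)) b₂) b₁) := by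
    unfold JJ
    rw [Finset.sum_comm]
    refine Finset.sum_congr rfl fun a₁ _ => ?_
    rw [Finset.sum_comm]
    conv_rhs => rw [Finset.sum_comm]
    refine Finset.sum_congr rfl fun b₁ _ => ?_
    conv_rhs => rw [Finset.sum_comm]
    refine Finset.sum_congr rfl fun b₂ _ => ?_
    rw [← Finset.sum_mul, ← Finset.mul_sum]
    rfl
  rw [e1, e2, ← Finset.sum_add_distrib]
  unfold JJ
  rw [Fintype.sum_prod_type]
  refine Finset.sum_congr rfl fun a₁ _ => ?_
  rw [← Finset.sum_add_distrib]
  refine Finset.sum_congr rfl fun a₂ _ => ?_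
  rw [← Finset.sum_add_distrib, Fintype.sum_prod_type]
  refine Finset.sum_congr rfl fun b₁ _ => ?_
  rw [← Finset.sum_add_distrib]
  refine Finset.sum_congr rfl fun b₂ _ => ?_
  rw [TT_prodS_one, TT_prodS]
  simp only [prodS]
  by_cases h1 : p₁ (a₁, b₁) = 0
  · simp [h1]
  by_cases h2 : p₂ (a₂, b₂) = 0
  · simp [h2]
  by_cases h3 : g (a₁, a₂) = 0
  · simp [h3]
  have k1 := TT_one_pos hp₁ h1
  have k2 := TT_one_pos hp₂ h2
  have k3 : 0 < TT p₂ (fun a₂ => g (a₁, a₂)) b₂ :=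
    TT_pos hp₂ (fun a => hg _) (a := a₂) (mul_ne_zero h2 h3)
  have k4 : 0 < TT p₁ (fun a₁ => TT p₂ (fun a₂ => g (a₁, a₂)) b₂) b₁ :=
    TT_pos hp₁ (fun a => TT_nonneg hp₂ (fun a => hg _) _) (a := a₁) (mul_ne_zero h1 k3.ne')
  have k5 : 0 < g (a₁, a₂) := lt_of_le_of_ne (hg _) (Ne.symm h3)
  rw [Real.log_div (by positivity) (by positivity), Real.log_div (by positivity) (by positivity),
    Real.log_div (by positivity) (by positivity), Real.log_mul (by positivity) (by positivity),
    Real.log_mul (by positivity) (by positivity), Real.log_mul (by positivity) (by positivity),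
    Real.log_mul (by positivity) (by positivity)]
  ring

lemma TT_equiv (e : A₁ ≃ A₂) (f : B₁ ≃ B₂) (p : A₂ × B₂ → ℝ) (g : A₂ → ℝ) (b : B₁) :
    TT (fun w : A₁ × B₁ => p (e w.1, f w.2)) (fun a => g (e a)) b = TT p g (f b) :=
  e.sum_comp (fun a => p (a, f b) * g a)

lemma DD_equiv (e : A₁ ≃ A₂) (f : B₁ ≃ B₂) (p q : A₂ × B₂ → ℝ) (g h : A₂ → ℝ) :
    DD (fun w : A₁ × B₁ => p (e w.1, f w.2)) (fun w : A₁ × B₁ => q (e w.1, f w.2))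
      (fun a => g (e a)) (fun a => h (e a)) = DD p q g h := by
  unfold DD
  simp_rw [TT_equiv]
  exact f.sum_comp (fun b => TT p g b * Real.log (TT p g b / TT q h b))

lemma JJ_equiv (e : A₁ ≃ A₂) (f : B₁ ≃ B₂) (p : A₂ × B₂ → ℝ) (g : A₂ → ℝ) :
    JJ (fun w : A₁ × B₁ => p (e w.1, f w.2)) (fun a => g (e a)) = JJ p g := by
  unfold JJ
  have h1 := TT_equiv e f p (fun _ => 1)
  simp_rw [TT_equiv, h1]
  rw [← e.sum_comp]
  refine Finset.sum_congr rfl fun a _ => ?_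
  exact f.sum_comp (fun b => p (e a, b) * g (e a) *
    Real.log (g (e a) * TT p (fun _ => 1) b / TT p g b))

lemma JJ_swap (p₁ : A₁ × B₁ → ℝ) (p₂ : A₂ × B₂ → ℝ) (g : A₁ × A₂ → ℝ) :
    JJ (prodS p₁ p₂) g = JJ (prodS p₂ p₁) (fun a => g (a.2, a.1)) := by
  rw [← JJ_equiv (Equiv.prodComm A₂ A₁) (Equiv.prodComm B₂ B₁)]
  congr 1
  ext w
  simp [prodS, mul_comm]

lemma JJ_two (p₁ : A₁ × B₁ → ℝ) (p₂ : A₂ × B₂ → ℝ) (r₁ : A₁ × C₁ → ℝ)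
    (hp₁ : ∀ w, 0 ≤ p₁ w) (hp₂ : ∀ w, 0 ≤ p₂ w) (hr₁ : ∀ w, 0 ≤ r₁ w)
    (hm : margFst r₁ = margFst p₁)
    (g : A₁ × A₂ → ℝ) (hg : ∀ a, 0 ≤ g a) :
    ∑ b₂, JJ p₁ (fun a₁ => TT p₂ (fun a₂ => g (a₁, a₂)) b₂) +
    ∑ c₁, JJ p₂ (fun a₂ => TT r₁ (fun a₁ => g (a₁, a₂)) c₁) ≤ JJ (prodS p₁ p₂) g := by
  rw [JJ_chain p₁ p₂ hp₁ hp₂ g hg, add_comm]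
  refine add_le_add_left ?_ _
  calc _ ≤ ∑ c₁, ∑ a₁, r₁ (a₁, c₁) * JJ p₂ (fun a₂ => g (a₁, a₂)) :=
        Finset.sum_le_sum fun c₁ _ => JJ_subadd p₂ hp₂ (fun a₁ => r₁ (a₁, c₁)) (fun _ => hr₁ _)
          (fun a₁ a₂ => g (a₁, a₂)) (fun _ _ => hg _)
    _ = _ := by
        rw [Finset.sum_comm, ← hm]
        refine Finset.sum_congr rfl fun a _ => ?_
        rw [margFst, Finset.sum_mul]

lemma JJ_two' (p₁ : A₁ × B₁ → ℝ) (p₂ : A₂ × B₂ → ℝ) (r₂ : A₂ × C₂ → ℝ)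
    (hp₁ : ∀ w, 0 ≤ p₁ w) (hp₂ : ∀ w, 0 ≤ p₂ w) (hr₂ : ∀ w, 0 ≤ r₂ w)
    (hm : margFst r₂ = margFst p₂)
    (g : A₁ × A₂ → ℝ) (hg : ∀ a, 0 ≤ g a) :
    ∑ c₂, JJ p₁ (fun a₁ => TT r₂ (fun a₂ => g (a₁, a₂)) c₂) +
    ∑ b₁, JJ p₂ (fun a₂ => TT p₁ (fun a₁ => g (a₁, a₂)) b₁) ≤ JJ (prodS p₁ p₂) g := by
  rw [JJ_swap, add_comm]
  exact JJ_two p₂ p₁ r₂ hp₂ hp₁ hr₂ hm (fun a => g (a.2, a.1)) (fun _ => hg _)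

structure Src (p q : A × B → ℝ) (r s : A × C → ℝ) : Prop where
  hp : ∀ w, 0 ≤ p w
  hq : ∀ w, 0 ≤ q w
  hr : ∀ w, 0 ≤ r w
  hs : ∀ w, 0 ≤ s w
  hpq : ∀ w, q w = 0 → p w = 0
  hrs : ∀ w, s w = 0 → r w = 0
  hm : margFst r = margFst p
  h1 : ∑ a, margFst p a = 1

def Good (p q : X × Y → ℝ) (r s : X × Z → ℝ) (n : ℕ)
    (P Q : A × B → ℝ) (R S : A × C → ℝ) : Prop :=
  ∀ (N : ℕ) (κ μ : Fin N → A → ℝ), (∀ m a, 0 ≤ κ m a) → (∀ m a, 0 ≤ μ m a) →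
    (∀ m a, μ m a = 0 → κ m a = 0) → (∀ a, ∑ m, κ m a = 1) →
    ∃ (N' : ℕ) (g h : Fin N' → X → ℝ), (∀ u x, 0 ≤ g u x) ∧ (∀ u x, 0 ≤ h u x) ∧
      (∀ u x, h u x = 0 → g u x = 0) ∧ (∀ x, ∑ u, g u x = n) ∧
      ∑ u, JJ p (g u) ≤ ∑ m, JJ P (κ m) ∧
      ∑ u, JJ r (g u) ≤ ∑ m, JJ R (κ m) ∧
      ∑ m, (DD P Q (κ m) (μ m) - DD R S (κ m) (μ m)) =
        ∑ u, (DD p q (g u) (h u) - DD r s (g u) (h u))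

lemma Good.of_fintype {p q : X × Y → ℝ} {r s : X × Z → ℝ} {n : ℕ}
    {P Q : A × B → ℝ} {R S : A × C → ℝ} (H : Good p q r s n P Q R S)
    {ι : Type*} [Fintype ι] (κ μ : ι → A → ℝ) (hκ : ∀ m a, 0 ≤ κ m a) (hμ : ∀ m a, 0 ≤ μ m a)
    (hac : ∀ m a, μ m a = 0 → κ m a = 0) (hs : ∀ a, ∑ m, κ m a = 1) :
    ∃ (N' : ℕ) (g h : Fin N' → X → ℝ), (∀ u x, 0 ≤ g u x) ∧ (∀ u x, 0 ≤ h u x) ∧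
      (∀ u x, h u x = 0 → g u x = 0) ∧ (∀ x, ∑ u, g u x = n) ∧
      ∑ u, JJ p (g u) ≤ ∑ m, JJ P (κ m) ∧
      ∑ u, JJ r (g u) ≤ ∑ m, JJ R (κ m) ∧
      ∑ m, (DD P Q (κ m) (μ m) - DD R S (κ m) (μ m)) =
        ∑ u, (DD p q (g u) (h u) - DD r s (g u) (h u)) := by
  have e := (Fintype.equivFin ι).symm
  have := H _ (fun m => κ (e m)) (fun m => μ (e m)) (fun _ => hκ _) (fun _ => hμ _)
    (fun _ => hac _) (fun a => by rw [← hs a]; exact e.sum_comp (fun m => κ m a))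
  rw [e.sum_comp (fun m => JJ P (κ m)), e.sum_comp (fun m => JJ R (κ m)),
    e.sum_comp (fun m => DD P Q (κ m) (μ m) - DD R S (κ m) (μ m))] at this
  exact this

lemma Good.one (p q : X × Y → ℝ) (r s : X × Z → ℝ) : Good p q r s 1 p q r s := by
  intro N κ μ h1 h2 h3 h4
  exact ⟨N, κ, μ, h1, h2, h3, by simpa using h4, le_rfl, le_rfl, rfl⟩

lemma margFst_prodS (p₁ : A₁ × B₁ → ℝ) (p₂ : A₂ × B₂ → ℝ) (a : A₁ × A₂) :
    margFst (prodS p₁ p₂) a = margFst p₁ a.1 * margFst p₂ a.2 := by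
  unfold margFst prodS
  rw [Fintype.sum_prod_type, Finset.sum_mul_sum]

lemma Src.prod {p₁ q₁ : A₁ × B₁ → ℝ} {r₁ s₁ : A₁ × C₁ → ℝ} {p₂ q₂ : A₂ × B₂ → ℝ}
    {r₂ s₂ : A₂ × C₂ → ℝ} (h₁ : Src p₁ q₁ r₁ s₁) (h₂ : Src p₂ q₂ r₂ s₂) :
    Src (prodS p₁ p₂) (prodS q₁ q₂) (prodS r₁ r₂) (prodS s₁ s₂) where
  hp w := mul_nonneg (h₁.hp _) (h₂.hp _)
  hq w := mul_nonneg (h₁.hq _) (h₂.hq _)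
  hr w := mul_nonneg (h₁.hr _) (h₂.hr _)
  hs w := mul_nonneg (h₁.hs _) (h₂.hs _)
  hpq w h := by
    rcases mul_eq_zero.1 h with h | h
    · exact mul_eq_zero.2 (Or.inl (h₁.hpq _ h))
    · exact mul_eq_zero.2 (Or.inr (h₂.hpq _ h))
  hrs w h := by
    rcases mul_eq_zero.1 h with h | h
    · exact mul_eq_zero.2 (Or.inl (h₁.hrs _ h))
    · exact mul_eq_zero.2 (Or.inr (h₂.hrs _ h))
  hm := by ext a; rw [margFst_prodS, margFst_prodS, h₁.hm, h₂.hm]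
  h1 := by
    simp_rw [margFst_prodS]
    rw [Fintype.sum_prod_type, ← Finset.sum_mul_sum, h₁.h1, h₂.h1, one_mul]

lemma sum_TT_one {p : A × B → ℝ} (h1 : ∑ a, margFst p a = 1) {ι : Type*} [Fintype ι]
    (κ : ι → A → ℝ) (hs : ∀ a, ∑ m, κ m a = 1) :
    ∑ mb : ι × B, TT p (κ mb.1) mb.2 = 1 := by
  rw [Fintype.sum_prod_type, Finset.sum_comm]
  unfold TT
  rw [← h1]
  unfold margFst
  conv_rhs => rw [Finset.sum_comm]
  refine Finset.sum_congr rfl fun b _ => ?_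
  rw [Finset.sum_comm]
  refine Finset.sum_congr rfl fun a _ => ?_
  dsimp only
  rw [← Finset.mul_sum, hs, mul_one]

lemma Good.prod {p q : X × Y → ℝ} {r s : X × Z → ℝ} {n₁ n₂ : ℕ}
    {p₁ q₁ : A₁ × B₁ → ℝ} {r₁ s₁ : A₁ × C₁ → ℝ} {p₂ q₂ : A₂ × B₂ → ℝ}
    {r₂ s₂ : A₂ × C₂ → ℝ} (h₁ : Src p₁ q₁ r₁ s₁) (h₂ : Src p₂ q₂ r₂ s₂)
    (H₁ : Good p q r s n₁ p₁ q₁ r₁ s₁) (H₂ : Good p q r s n₂ p₂ q₂ r₂ s₂) :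
    Good p q r s (n₁ + n₂) (prodS p₁ p₂) (prodS q₁ q₂) (prodS r₁ r₂) (prodS s₁ s₂) := by
  intro N κ μ hκ hμ hac hs
  obtain ⟨N₁, g₁, k₁, a1, a2, a3, a4, a5, a6, a7⟩ := H₁.of_fintype
    (ι := Fin N × B₂)
    (fun m a₁ => TT p₂ (fun a₂ => κ m.1 (a₁, a₂)) m.2)
    (fun m a₁ => TT q₂ (fun a₂ => μ m.1 (a₁, a₂)) m.2)
    (fun m a => TT_nonneg h₂.hp (fun _ => hκ _ _) _)
    (fun m a => TT_nonneg h₂.hq (fun _ => hμ _ _) _)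
    (fun m a => TT_ac h₂.hq (fun _ => hμ _ _) h₂.hpq (fun _ => hac _ _) _)
    (fun a => sum_TT_one h₂.h1 (fun m a₂ => κ m (a, a₂)) (fun _ => hs _))
  obtain ⟨N₂, g₂, k₂, b1, b2, b3, b4, b5, b6, b7⟩ := H₂.of_fintype
    (ι := Fin N × C₁)
    (fun m a₂ => TT r₁ (fun a₁ => κ m.1 (a₁, a₂)) m.2)
    (fun m a₂ => TT s₁ (fun a₁ => μ m.1 (a₁, a₂)) m.2)
    (fun m a => TT_nonneg h₁.hr (fun _ => hκ _ _) _)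
    (fun m a => TT_nonneg h₁.hs (fun _ => hμ _ _) _)
    (fun m a => TT_ac h₁.hs (fun _ => hμ _ _) h₁.hrs (fun _ => hac _ _) _)
    (fun a => sum_TT_one (p := r₁) (by rw [h₁.hm]; exact h₁.h1)
      (fun m a₁ => κ m (a₁, a)) (fun _ => hs _))
  rw [Fintype.sum_prod_type] at a5 a6 a7 b5 b6 b7
  refine ⟨N₁ + N₂, Fin.append g₁ g₂, Fin.append k₁ k₂, ?_, ?_, ?_, ?_, ?_, ?_, ?_⟩
  · intro u; refine Fin.addCases (fun i => ?_) (fun i => ?_) u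
    · simpa using a1 i
    · simpa using b1 i
  · intro u; refine Fin.addCases (fun i => ?_) (fun i => ?_) u
    · simpa using a2 i
    · simpa using b2 i
  · intro u; refine Fin.addCases (fun i => ?_) (fun i => ?_) u
    · simpa using a3 i
    · simpa using b3 i
  · intro x
    rw [Fin.sum_univ_add]
    simp [a4, b4]
  · rw [Fin.sum_univ_add]
    simp only [Fin.append_left, Fin.append_right]
    refine (add_le_add a5 b5).trans ?_
    rw [← Finset.sum_add_distrib]
    exact Finset.sum_le_sum fun m _ => JJ_two p₁ p₂ r₁ h₁.hp h₂.hp h₁.hr h₁.hm (κ m) (hκ m)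
  · rw [Fin.sum_univ_add]
    simp only [Fin.append_left, Fin.append_right]
    refine (add_le_add a6 b6).trans ?_
    rw [← Finset.sum_add_distrib]
    exact Finset.sum_le_sum fun m _ => JJ_two' r₁ r₂ p₂ h₁.hr h₂.hr h₂.hp h₂.hm.symm (κ m) (hκ m)
  · rw [Fin.sum_univ_add]
    simp only [Fin.append_left, Fin.append_right]
    rw [← a7, ← b7, ← Finset.sum_add_distrib]
    refine Finset.sum_congr rfl fun m _ => ?_
    rw [Finset.sum_sub_distrib, Finset.sum_sub_distrib, ← DD_prodS p₁ q₁ p₂ q₂ (κ m) (μ m),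
      ← DD_prodS r₁ s₁ p₂ q₂ (κ m) (μ m), ← DD_prodS' r₁ s₁ r₂ s₂ (κ m) (μ m),
      ← DD_prodS' r₁ s₁ p₂ q₂ (κ m) (μ m)]
    ring

lemma Good.equiv {p q : X × Y → ℝ} {r s : X × Z → ℝ} {n : ℕ}
    {P Q : A₂ × B₂ → ℝ} {R S : A₂ × C₂ → ℝ} (H : Good p q r s n P Q R S)
    (e : A₁ ≃ A₂) (f : B₁ ≃ B₂) (f' : C₁ ≃ C₂) :
    Good p q r s n (fun w : A₁ × B₁ => P (e w.1, f w.2)) (fun w => Q (e w.1, f w.2))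
      (fun w : A₁ × C₁ => R (e w.1, f' w.2)) (fun w => S (e w.1, f' w.2)) := by
  intro N κ μ hκ hμ hac hs
  have := H N (fun m a => κ m (e.symm a)) (fun m a => μ m (e.symm a)) (fun _ _ => hκ _ _)
    (fun _ _ => hμ _ _) (fun _ _ => hac _ _) (fun _ => hs _)
  simp_rw [← JJ_equiv e f P, ← JJ_equiv e f' R, ← DD_equiv e f P Q, ← DD_equiv e f' R S] at this
  simpa using this

def powS (n : ℕ) (p : A × B → ℝ) : (Fin n → A) × (Fin n → B) → ℝ :=
  fun w => ∏ i, p (w.1 i, w.2 i)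

lemma powS_succ (n : ℕ) (p : A × B → ℝ) : powS (n + 1) p =
    fun w => prodS p (powS n p) ((Fin.consEquiv (fun _ : Fin (n + 1) => A)).symm w.1,
      (Fin.consEquiv (fun _ : Fin (n + 1) => B)).symm w.2) := by
  ext w
  simp [powS, prodS, Fin.prod_univ_succ, Fin.consEquiv]
  left
  rfl

lemma margFst_powS (n : ℕ) (p : A × B → ℝ) (a : Fin n → A) :
    margFst (powS n p) a = ∏ i, margFst p (a i) := by
  classical
  unfold margFst powS
  simp only
  rw [Finset.prod_univ_sum]
  simp

lemma Src.pow {p q : A × B → ℝ} {r s : A × C → ℝ} (h : Src p q r s) (n : ℕ) :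
    Src (powS n p) (powS n q) (powS n r) (powS n s) where
  hp w := Finset.prod_nonneg fun _ _ => h.hp _
  hq w := Finset.prod_nonneg fun _ _ => h.hq _
  hr w := Finset.prod_nonneg fun _ _ => h.hr _
  hs w := Finset.prod_nonneg fun _ _ => h.hs _
  hpq w h0 := by
    obtain ⟨i, hi, h1⟩ := Finset.prod_eq_zero_iff.1 h0
    exact Finset.prod_eq_zero hi (h.hpq _ h1)
  hrs w h0 := by
    obtain ⟨i, hi, h1⟩ := Finset.prod_eq_zero_iff.1 h0
    exact Finset.prod_eq_zero hi (h.hrs _ h1)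
  hm := by ext a; rw [margFst_powS, margFst_powS, h.hm]
  h1 := by
    classical
    simp_rw [margFst_powS]
    have := Finset.prod_univ_sum (fun _ : Fin n => (Finset.univ : Finset A)) (fun _ a => margFst p a)
    rw [Fintype.piFinset_univ] at this
    rw [← this, Finset.prod_eq_one]
    exact fun _ _ => h.h1

lemma Good.pow {p q : A × B → ℝ} {r s : A × C → ℝ} (h : Src p q r s) (n : ℕ) :
    Good p q r s n (powS n p) (powS n q) (powS n r) (powS n s) := by
  induction n with
  | zero =>
    intro N κ μ hκ hμ hac hs
    refine ⟨0, Fin.elim0, Fin.elim0, fun u => u.elim0, fun u => u.elim0, fun u => u.elim0,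
      by simp, ?_, ?_, ?_⟩
    · simp only [Finset.univ_eq_empty, Finset.sum_empty]
      refine Finset.sum_nonneg fun m _ => ?_
      by_cases h0 : κ m default = 0 <;> simp [JJ, TT, powS, h0]
    · simp only [Finset.univ_eq_empty, Finset.sum_empty]
      refine Finset.sum_nonneg fun m _ => ?_
      by_cases h0 : κ m default = 0 <;> simp [JJ, TT, powS, h0]
    · simp [DD, TT, powS]
  | succ n ih =>
    have := (Good.prod h (h.pow n) (Good.one p q r s) ih).equiv
      (Fin.consEquiv (fun _ : Fin (n + 1) => A)).symm
      (Fin.consEquiv (fun _ : Fin (n + 1) => B)).symm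
      (Fin.consEquiv (fun _ : Fin (n + 1) => C)).symm
    rw [← powS_succ, ← powS_succ, ← powS_succ, ← powS_succ, add_comm 1 n] at this
    exact this

lemma sum_margFst (p : A × B → ℝ) : ∑ a, margFst p a = ∑ b, TT p (fun _ => 1) b := by
  unfold margFst TT
  rw [Finset.sum_comm]
  simp

lemma sum_TT (p : A × B → ℝ) (g : A → ℝ) : ∑ b, TT p g b = ∑ a, g a * margFst p a := by
  unfold margFst TT
  rw [Finset.sum_comm]
  refine Finset.sum_congr rfl fun a _ => ?_
  rw [Finset.mul_sum]
  refine Finset.sum_congr rfl fun b _ => mul_comm _ _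

lemma JJ_bound (p : A × B → ℝ) (hp : ∀ w, 0 ≤ p w) (h1 : ∑ a, margFst p a = 1) (N : ℕ) (hN : 0 < N)
    (κ : Fin N → A → ℝ) (hκ : ∀ m a, 0 ≤ κ m a) (hs : ∀ a, ∑ m, κ m a = 1) :
    ∑ m, JJ p (κ m) ≤ Real.log N := by
  have hNr : (0 : ℝ) < N := by exact_mod_cast hN
  have key : ∀ m a b, p (a, b) * κ m a * Real.log (κ m a * TT p (fun _ => 1) b / TT p (κ m) b) ≤
      p (a, b) * κ m a * (Real.log N - 1) +
      p (a, b) * κ m a * (TT p (fun _ => 1) b / (N * TT p (κ m) b)) := by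
    intro m a b
    by_cases h0 : p (a, b) * κ m a = 0
    · simp [h0]
    have hpk : 0 < p (a, b) * κ m a := lt_of_le_of_ne (mul_nonneg (hp _) (hκ _ _)) (Ne.symm h0)
    have k1 := TT_one_pos hp (left_ne_zero_of_mul h0)
    have k2 := TT_pos hp (hκ m) h0
    have k3 : 0 < κ m a := lt_of_le_of_ne (hκ _ _) (Ne.symm (right_ne_zero_of_mul h0))
    have k4 : κ m a ≤ 1 := by
      rw [← hs a]
      exact Finset.single_le_sum (f := fun m => κ m a) (fun m _ => hκ m a) (Finset.mem_univ m)
    rw [← mul_add]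
    refine mul_le_mul_of_nonneg_left ?_ hpk.le
    have l1 : Real.log (κ m a * TT p (fun _ => 1) b / TT p (κ m) b) ≤
        Real.log (N * (TT p (fun _ => 1) b / (N * TT p (κ m) b))) := by
      apply Real.log_le_log (by positivity)
      rw [mul_div_mul_left _ _ hNr.ne' |> fun h => (mul_div_assoc _ _ _).symm.trans h]
      gcongr
      nlinarith
    have l2 := Real.log_le_sub_one_of_pos
      (x := TT p (fun _ => 1) b / (N * TT p (κ m) b)) (by positivity)
    rw [Real.log_mul (by positivity) (by positivity)] at l1
    linarith
  have h2 : ∑ m, ∑ a, ∑ b, p (a, b) * κ m a * (Real.log N - 1) = Real.log N - 1 := by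
    have : ∑ m, ∑ a, ∑ b, p (a, b) * κ m a = 1 := by
      rw [Finset.sum_comm, ← h1]
      refine Finset.sum_congr rfl fun a _ => ?_
      rw [margFst, Finset.sum_comm]
      refine Finset.sum_congr rfl fun b _ => ?_
      rw [← Finset.mul_sum, hs, mul_one]
    simp_rw [← Finset.sum_mul] at this ⊢
    rw [this, one_mul]
  have h3 : ∑ m, ∑ a, ∑ b, p (a, b) * κ m a * (TT p (fun _ => 1) b / (N * TT p (κ m) b)) ≤ 1 := by
    have : ∀ m, ∑ a, ∑ b, p (a, b) * κ m a * (TT p (fun _ => 1) b / (N * TT p (κ m) b)) ≤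
        1 / N := by
      intro m
      have hone : (1 : ℝ) / N = ∑ b, TT p (fun _ => 1) b / N := by
        rw [← Finset.sum_div, ← sum_margFst, h1]
      rw [Finset.sum_comm, hone]
      refine Finset.sum_le_sum fun b _ => ?_
      rw [← Finset.sum_mul]
      change TT p (κ m) b * _ ≤ _
      have k1 : 0 ≤ TT p (fun _ => 1) b := TT_nonneg hp (fun _ => zero_le_one) b
      by_cases h0 : TT p (κ m) b = 0
      · rw [h0, zero_mul]; positivity
      · refine le_of_eq ?_
        field_simp
    refine (Finset.sum_le_sum fun m _ => this m).trans (le_of_eq ?_)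
    simp [hNr.ne']
  have h4 : ∑ m, JJ p (κ m) ≤ ∑ m, ∑ a, ∑ b, (p (a, b) * κ m a * (Real.log N - 1) +
      p (a, b) * κ m a * (TT p (fun _ => 1) b / (N * TT p (κ m) b))) :=
    Finset.sum_le_sum fun m _ => Finset.sum_le_sum fun a _ => Finset.sum_le_sum fun b _ => key m a b
  simp_rw [Finset.sum_add_distrib] at h4
  linarith

lemma TT_smul (p : A × B → ℝ) (c : ℝ) (g : A → ℝ) (b : B) :
    TT p (fun a => c * g a) b = c * TT p g b := by
  unfold TT
  rw [Finset.mul_sum]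
  refine Finset.sum_congr rfl fun a _ => by ring

lemma JJ_smul (p : A × B → ℝ) (c : ℝ) (hc : c ≠ 0) (g : A → ℝ) :
    JJ p (fun a => c * g a) = c * JJ p g := by
  unfold JJ
  simp_rw [Finset.mul_sum, TT_smul]
  refine Finset.sum_congr rfl fun a _ => Finset.sum_congr rfl fun b _ => ?_
  rw [mul_assoc c, mul_div_mul_left _ _ hc]
  ring

lemma DD_smul (p q : A × B → ℝ) (c : ℝ) (hc : c ≠ 0) (g h : A → ℝ) :
    DD p q (fun a => c * g a) (fun a => c * h a) = c * DD p q g h := by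
  unfold DD
  simp_rw [Finset.mul_sum, TT_smul]
  refine Finset.sum_congr rfl fun b _ => ?_
  rw [mul_div_mul_left _ _ hc]
  ring

lemma entropy_pushf {Ω α : Type*} [Fintype Ω] [Fintype α] (p : Ω → ℝ) (f : Ω → α) :
    entropy (pushf p f) = -∑ ω, p ω * Real.log (pushf p f (f ω)) := by
  classical
  unfold entropy
  congr 1
  have : ∀ a, pushf p f a * Real.log (pushf p f a) =
      ∑ ω, if f ω = a then p ω * Real.log (pushf p f a) else 0 := by
    intro a
    conv_lhs => enter [1]; unfold pushf
    rw [Finset.sum_mul]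
    refine Finset.sum_congr rfl fun ω _ => ?_
    by_cases h : f ω = a <;> simp [h]
  simp_rw [this]
  rw [Finset.sum_comm]
  refine Finset.sum_congr rfl fun ω _ => ?_
  simp

lemma condMI_eq (p : X × Y → ℝ) (hp : ∀ w, 0 ≤ p w) (m : ℕ) (ch : X → Fin m → ℝ)
    (hch : ∀ x, IsPMF (ch x)) :
    condMI (fun w : Fin m × X × Y => ch w.2.1 w.1 * p (w.2.1, w.2.2))
      (fun w => w.1) (fun w => w.2.1) (fun w => w.2.2) = ∑ u, JJ p (fun x => ch x u) := by
  classical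
  have e1 : ∀ w : Fin m × X × Y, pushf (fun w : Fin m × X × Y => ch w.2.1 w.1 * p (w.2.1, w.2.2))
      (fun w => (w.1, w.2.2)) (w.1, w.2.2) = TT p (fun x => ch x w.1) w.2.2 := by
    intro w
    simp only [pushf, TT, Fintype.sum_prod_type, Prod.mk.injEq, ite_and]
    simp [mul_comm]
  have e2 : ∀ w : Fin m × X × Y, pushf (fun w : Fin m × X × Y => ch w.2.1 w.1 * p (w.2.1, w.2.2))
      (fun w => (w.2.1, w.2.2)) (w.2.1, w.2.2) = p (w.2.1, w.2.2) := by
    intro w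
    simp only [pushf, Fintype.sum_prod_type, Prod.mk.injEq, ite_and]
    simp [← Finset.sum_mul, (hch w.2.1).2]
  have e3 : ∀ w : Fin m × X × Y, pushf (fun w : Fin m × X × Y => ch w.2.1 w.1 * p (w.2.1, w.2.2))
      (fun w => (w.1, w.2.1, w.2.2)) (w.1, w.2.1, w.2.2) = ch w.2.1 w.1 * p (w.2.1, w.2.2) := by
    intro w
    simp only [pushf, Fintype.sum_prod_type, Prod.mk.injEq, ite_and]
    simp
  have e4 : ∀ w : Fin m × X × Y, pushf (fun w : Fin m × X × Y => ch w.2.1 w.1 * p (w.2.1, w.2.2))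
      (fun w => w.2.2) w.2.2 = TT p (fun _ => 1) w.2.2 := by
    intro w
    simp only [pushf, TT, Fintype.sum_prod_type]
    rw [Finset.sum_comm]
    refine Finset.sum_congr rfl fun x _ => ?_
    simp [← Finset.sum_mul, (hch x).2]
  unfold condMI
  rw [entropy_pushf, entropy_pushf, entropy_pushf, entropy_pushf]
  simp_rw [e1, e2, e3, e4]
  have : ∑ u, JJ p (fun x => ch x u) = ∑ w : Fin m × X × Y, (p (w.2.1, w.2.2) * ch w.2.1 w.1 *
      Real.log (ch w.2.1 w.1 * TT p (fun _ => 1) w.2.2 / TT p (fun x => ch x w.1) w.2.2)) := by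
    simp_rw [Fintype.sum_prod_type]
    rfl
  rw [this, sub_neg_eq_add, sub_neg_eq_add, ← Finset.sum_neg_distrib, ← Finset.sum_neg_distrib,
    ← Finset.sum_add_distrib, ← Finset.sum_add_distrib, ← Finset.sum_add_distrib]
  refine Finset.sum_congr rfl fun w _ => ?_
  by_cases h1 : p (w.2.1, w.2.2) = 0
  · simp [h1]
  by_cases h2 : ch w.2.1 w.1 = 0
  · simp [h2]
  have k1 := TT_one_pos hp h1
  have k2 : 0 < TT p (fun x => ch x w.1) w.2.2 :=
    TT_pos hp (fun x => (hch x).1 _) (a := w.2.1) (mul_ne_zero h1 h2)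
  rw [Real.log_div (mul_ne_zero h2 k1.ne') k2.ne', Real.log_mul h2 k1.ne', Real.log_mul h2 h1]
  ring

lemma outDist_eq (p : X × Y → ℝ) (hp : ∀ w, 0 ≤ p w) (g : X → ℝ) (c : ℝ) (b : Y) :
    outDist (condSnd p) (fun x => g x * margFst p x / c) b = TT p g b / c := by
  unfold outDist condSnd TT
  rw [Finset.sum_div]
  refine Finset.sum_congr rfl fun x _ => ?_
  by_cases h0 : margFst p x = 0
  · have : p (x, b) = 0 := by
      unfold margFst at h0
      rw [Finset.sum_eq_zero_iff_of_nonneg (fun _ _ => hp _)] at h0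
      exact h0 b (Finset.mem_univ _)
    simp [this]
  · field_simp

lemma klDiv_out (p q : X × Y → ℝ) (hp : ∀ w, 0 ≤ p w) (hq : ∀ w, 0 ≤ q w)
    (hpq : ∀ w, q w = 0 → p w = 0)
    (g h : X → ℝ) (hg : ∀ x, 0 ≤ g x) (hh : ∀ x, 0 ≤ h x) (hgh : ∀ x, h x = 0 → g x = 0)
    (c d : ℝ) (hc : 0 < c) (hd : 0 < d) (hcs : ∑ x, g x * margFst p x = c) :
    klDiv (outDist (condSnd p) (fun x => g x * margFst p x / c))
      (outDist (condSnd q) (fun x => h x * margFst q x / d)) =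
      ((DD p q g h / c + Real.log (d / c) : ℝ) : EReal) := by
  unfold klDiv
  rw [if_pos]
  · congr 1
    simp_rw [outDist_eq p hp, outDist_eq q hq]
    have : Real.log (d / c) = ∑ b, TT p g b / c * Real.log (d / c) := by
      rw [← Finset.sum_mul, ← Finset.sum_div, sum_TT, hcs, div_self hc.ne', one_mul]
    rw [this, DD, Finset.sum_div, ← Finset.sum_add_distrib]
    refine Finset.sum_congr rfl fun b _ => ?_
    by_cases h0 : TT p g b = 0
    · simp [h0]
    have h1 : TT q h b ≠ 0 := fun h1 => h0 (TT_ac hq hh hpq hgh b h1)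
    rw [show TT p g b / c / (TT q h b / d) = (TT p g b / TT q h b) * (d / c) by field_simp,
      Real.log_mul (div_ne_zero h0 h1) (by positivity)]
    ring
  · intro b
    rw [outDist_eq p hp, outDist_eq q hq]
    intro h0
    rcases div_eq_zero_iff.1 h0 with h1 | h1
    · rw [TT_ac hq hh hpq hgh b h1, zero_div]
    · exact absurd h1 hd.ne'

lemma F_bound {p q : X × Y → ℝ} {r s : X × Z → ℝ} (H : Src p q r s)
    (hms : margFst s = margFst q) (g h : X → ℝ) (hg : ∀ x, 0 ≤ g x) (hh : ∀ x, 0 ≤ h x)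
    (hgh : ∀ x, h x = 0 → g x = 0) :
    ((DD p q g h - DD r s g h : ℝ) : EReal) ≤
      ((∑ x, g x * margFst p x : ℝ) : EReal) *
        fdiff (condSnd p) (condSnd r) (condSnd q) (condSnd s) (margFst q)
          (fun x => g x * margFst p x / ∑ x', g x' * margFst p x') := by
  have hmp : ∀ x, 0 ≤ margFst p x := fun x => Finset.sum_nonneg fun _ _ => H.hp _
  have hmq : ∀ x, 0 ≤ margFst q x := fun x => Finset.sum_nonneg fun _ _ => H.hq _
  by_cases h0 : ∑ x, g x * margFst p x = 0
  · have z1 : ∀ b, TT p g b = 0 := by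
      have := sum_TT p g
      rw [h0, Finset.sum_eq_zero_iff_of_nonneg (fun b _ => TT_nonneg H.hp hg b)] at this
      exact fun b => this b (Finset.mem_univ _)
    have z2 : ∀ b, TT r g b = 0 := by
      have := sum_TT r g
      rw [H.hm, h0, Finset.sum_eq_zero_iff_of_nonneg (fun b _ => TT_nonneg H.hr hg b)] at this
      exact fun b => this b (Finset.mem_univ _)
    rw [h0]
    simp [DD, z1, z2]
  have hc : 0 < ∑ x, g x * margFst p x :=
    lt_of_le_of_ne (Finset.sum_nonneg fun x _ => mul_nonneg (hg x) (hmp x)) (Ne.symm h0)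
  have hd : 0 < ∑ x, h x * margFst q x := by
    refine lt_of_le_of_ne (Finset.sum_nonneg fun x _ => mul_nonneg (hh x) (hmq x)) ?_
    intro h1
    apply h0
    have h1 := h1.symm
    rw [Finset.sum_eq_zero_iff_of_nonneg (fun x _ => mul_nonneg (hh x) (hmq x))] at h1
    refine Finset.sum_eq_zero fun x hx => ?_
    rcases mul_eq_zero.1 (h1 x hx) with h2 | h2
    · rw [hgh x h2, zero_mul]
    · have : margFst p x = 0 := by
        unfold margFst at h2 ⊢
        rw [Finset.sum_eq_zero_iff_of_nonneg (fun _ _ => H.hq _)] at h2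
        exact Finset.sum_eq_zero fun y hy => H.hpq _ (h2 y hy)
      rw [this, mul_zero]
  generalize hcc : ∑ x, g x * margFst p x = c at *
  generalize hdd : ∑ x, h x * margFst q x = d at *
  have e1 := klDiv_out p q H.hp H.hq H.hpq g h hg hh hgh c d hc hd hcc
  have e2 := klDiv_out r s H.hr H.hs H.hrs g h hg hh hgh c d hc hd (by rw [H.hm]; exact hcc)
  rw [H.hm, hms] at e2
  have hle : ((DD p q g h / c + Real.log (d / c) : ℝ) : EReal)
      - ((DD r s g h / c + Real.log (d / c) : ℝ) : EReal) ≤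
      fdiff (condSnd p) (condSnd r) (condSnd q) (condSnd s) (margFst q)
          (fun x => g x * margFst p x / c) := by
    refine le_sSup ⟨fun x => h x * margFst q x / d, ⟨?_, ?_⟩, ?_, ?_⟩
    · exact fun x => div_nonneg (mul_nonneg (hh x) (hmq x)) hd.le
    · rw [← Finset.sum_div, hdd, div_self hd.ne']
    · intro x hx; simp [hx]
    · rw [e1, e2]
  refine le_trans (le_of_eq ?_) (mul_le_mul_of_nonneg_left hle (EReal.coe_nonneg.2 hc.le))
  rw [← EReal.coe_sub, ← EReal.coe_mul]
  congr 1
  field_simp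
  ring

lemma coe_sum_le {ι : Type*} (t : Finset ι) (a : ι → ℝ) (b : ι → EReal)
    (h : ∀ i, (a i : EReal) ≤ b i) : ((∑ i ∈ t, a i : ℝ) : EReal) ≤ ∑ i ∈ t, b i := by
  classical
  induction t using Finset.induction_on with
  | empty => simp
  | insert i t hi ih =>
    rw [Finset.sum_insert hi, Finset.sum_insert hi, EReal.coe_add]
    exact add_le_add (h i) ih

lemma step {p q : X × Y → ℝ} {r s : X × Z → ℝ} (H : Src p q r s)
    (hms : margFst s = margFst q) (R : ℝ) (hR : 0 < R) (n : ℕ) (hn : 0 < n)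
    (κ : (Fin n → X) → Fin (2 ^ ⌊(n : ℝ) * R⌋₊) → ℝ) (hκ : ∀ x, IsPMF (κ x)) :
    (((n : ℝ)⁻¹ * ∑ m, DD (powS n p) (powS n q) (fun x => κ x m) (fun x => κ x m) : ℝ) : EReal) ≤
      Gexp p q r s R +
      (((n : ℝ)⁻¹ * ∑ m, DD (powS n r) (powS n s) (fun x => κ x m) (fun x => κ x m) : ℝ) : EReal)
      := by
  have hnr : (0 : ℝ) < n := by exact_mod_cast hn
  have hni : (n : ℝ)⁻¹ ≠ 0 := by positivity
  obtain ⟨N, g, h, a1, a2, a3, a4, a5, a6, a7⟩ := Good.pow H n _ (fun m x => κ x m)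
    (fun m x => κ x m) (fun m x => (hκ x).1 m) (fun m x => (hκ x).1 m) (fun _ _ h => h)
    (fun x => (hκ x).2)
  have hlog : Real.log ((2 ^ ⌊(n : ℝ) * R⌋₊ : ℕ) : ℝ) ≤ n * R := by
    push_cast
    rw [Real.log_pow]
    have f1 : ((⌊(n : ℝ) * R⌋₊ : ℕ) : ℝ) ≤ n * R := Nat.floor_le (by positivity)
    have f2 : Real.log 2 ≤ 1 := by linarith [Real.log_two_lt_d9]
    have f3 : 0 ≤ Real.log 2 := Real.log_nonneg (by norm_num)
    have f4 : (0 : ℝ) ≤ (⌊(n : ℝ) * R⌋₊ : ℕ) := Nat.cast_nonneg _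
    nlinarith
  have SP := H.pow n
  have b5 := (a5.trans (JJ_bound _ SP.hp SP.h1 _ (by positivity) (fun m x => κ x m)
    (fun m x => (hκ x).1 m) (fun x => (hκ x).2))).trans hlog
  have b6 := (a6.trans (JJ_bound _ SP.hr (by rw [SP.hm]; exact SP.h1) _ (by positivity)
    (fun m x => κ x m) (fun m x => (hκ x).1 m) (fun x => (hκ x).2))).trans hlog
  have hch : ∀ x, IsPMF (fun u => (n : ℝ)⁻¹ * g u x) := by
    intro x
    refine ⟨fun u => mul_nonneg (by positivity) (a1 u x), ?_⟩
    rw [← Finset.mul_sum, a4, inv_mul_cancel₀ hnr.ne']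
  have hG : (((n : ℝ)⁻¹ * ∑ u, (DD p q (g u) (h u) - DD r s (g u) (h u)) : ℝ) : EReal) ≤
      Gexp p q r s R := by
    refine le_trans ?_ (le_sSup ⟨N, fun x u => (n : ℝ)⁻¹ * g u x, hch, ?_, ?_, rfl⟩)
    · rw [Finset.mul_sum]
      refine coe_sum_le _ _ _ fun u => ?_
      refine le_trans (le_of_eq ?_) (F_bound H hms (fun x => (n : ℝ)⁻¹ * g u x)
        (fun x => (n : ℝ)⁻¹ * h u x) (fun x => mul_nonneg (by positivity) (a1 u x))
        (fun x => mul_nonneg (by positivity) (a2 u x)) ?_)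
      · rw [DD_smul _ _ _ hni, DD_smul _ _ _ hni, mul_sub]
      · intro x hx
        rw [a3 u x ((mul_eq_zero.1 hx).resolve_left hni), mul_zero]
    · rw [condMI_eq p H.hp N _ hch]
      simp_rw [JJ_smul _ _ hni]
      rw [← Finset.mul_sum, inv_mul_le_iff₀ hnr]
      exact b5
    · rw [condMI_eq r H.hr N _ hch]
      simp_rw [JJ_smul _ _ hni]
      rw [← Finset.mul_sum, inv_mul_le_iff₀ hnr]
      exact b6
  rw [← a7, Finset.sum_sub_distrib, mul_sub] at hG
  refine le_trans (le_of_eq ?_) (add_le_add_left hG _)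
  rw [← EReal.coe_add, sub_add_cancel]

lemma chain_sum (k : ℕ) (a : Fin (k + 1) → ℝ) (G : Fin k → EReal)
    (h : ∀ j, (a j.castSucc : EReal) ≤ G j + (a j.succ : EReal)) :
    (a 0 : EReal) ≤ ∑ j, G j + (a (Fin.last k) : EReal) := by
  induction k with
  | zero => simp
  | succ k ih =>
    rw [Fin.sum_univ_castSucc]
    refine (ih (fun j => a j.castSucc) (fun j => G j.castSucc) (fun j => h j.castSucc)).trans ?_
    rw [add_assoc]
    exact add_le_add_right (h (Fin.last k)) _

lemma klDiv_ac {p q : A → ℝ} (h : klDiv p q < ⊤) : ∀ a, q a = 0 → p a = 0 := by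
  by_contra hc
  unfold klDiv at h
  rw [if_neg hc] at h
  exact lt_irrefl _ h

lemma Src.of {p q : X × Y → ℝ} {r s : X × Z → ℝ} (hp : IsPMF p) (hq : IsPMF q) (hr : IsPMF r)
    (hs : IsPMF s) (hm : margFst r = margFst p) (h1 : klDiv p q < ⊤) (h2 : klDiv r s < ⊤) :
    Src p q r s where
  hp := hp.1
  hq := hq.1
  hr := hr.1
  hs := hs.1
  hpq := klDiv_ac h1
  hrs := klDiv_ac h2
  hm := hm
  h1 := by rw [← hp.2, Fintype.sum_prod_type]; rfl

lemma klDiv_pow {p q : X × Y → ℝ} (hq : ∀ w, 0 ≤ q w) (hpq : ∀ w, q w = 0 → p w = 0)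
    (n N : ℕ) (κ : (Fin n → X) → Fin N → ℝ) (hκ : ∀ x, IsPMF (κ x)) :
    klDiv (fun mw : Fin N × (Fin n → Y) => ∑ x : Fin n → X, (∏ i, p (x i, mw.2 i)) * κ x mw.1)
      (fun mw : Fin N × (Fin n → Y) => ∑ x : Fin n → X, (∏ i, q (x i, mw.2 i)) * κ x mw.1) =
    ((∑ m, DD (powS n p) (powS n q) (fun x => κ x m) (fun x => κ x m) : ℝ) : EReal) := by
  unfold klDiv
  rw [if_pos]
  · rw [Fintype.sum_prod_type]
    rfl
  · intro mw
    refine TT_ac (p := powS n p) (q := powS n q) (g := fun x => κ x mw.1) (h := fun x => κ x mw.1)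
      (fun w => Finset.prod_nonneg fun _ _ => hq _) (fun x => (hκ x).1 _) ?_ (fun _ h => h) mw.2
    intro w h0
    obtain ⟨i, hi, h1⟩ := Finset.prod_eq_zero_iff.1 h0
    exact Finset.prod_eq_zero hi (hpq _ h1)

end helpers

/-- Chain of auxiliary receivers `Z_0, …, Z_k` (so `k+1 ≥ 1` receivers):
`E_{P_XY,Q_XY}(R) ≤ G_{P_XY,Q_XY,P_XZ₀,Q_XZ₀}(R)
  + ∑_j G_{P_XZ_j,Q_XZ_j,P_XZ_{j+1},Q_XZ_{j+1}}(R) + E_{P_XZ_k,Q_XZ_k}(R)`. -/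
theorem chain_of_aux_receivers {X Y : Type*} [Fintype X] [Fintype Y]
    (k : ℕ) (Z : Fin (k + 1) → Type*) [∀ j, Fintype (Z j)]
    (R : ℝ) (hR : 0 < R)
    (pXY qXY : X × Y → ℝ) (hpXY : IsPMF pXY) (hqXY : IsPMF qXY)
    (pXZ qXZ : (j : Fin (k + 1)) → X × Z j → ℝ)
    (hpXZ : ∀ j, IsPMF (pXZ j)) (hqXZ : ∀ j, IsPMF (qXZ j))
    (hmargP : ∀ j, margFst (pXZ j) = margFst pXY)
    (hmargQ : ∀ j, margFst (qXZ j) = margFst qXY)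
    (hfinY : klDiv pXY qXY < ⊤)
    (hfinZ : ∀ j, klDiv (pXZ j) (qXZ j) < ⊤) :
    errExp pXY qXY R
      ≤ Gexp pXY qXY (pXZ 0) (qXZ 0) R
        + ∑ j : Fin k,
            Gexp (pXZ j.castSucc) (qXZ j.castSucc) (pXZ j.succ) (qXZ j.succ) R
        + errExp (pXZ (Fin.last k)) (qXZ (Fin.last k)) R := by
  refine sSup_le ?_
  rintro v ⟨n, hn, κ, hκ, rfl⟩
  have s0 := step (Src.of hpXY hqXY (hpXZ 0) (hqXZ 0) (hmargP 0) hfinY (hfinZ 0)) (hmargQ 0)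
    R hR n hn κ hκ
  have s1 := chain_sum k (fun j => (n : ℝ)⁻¹ * ∑ m, DD (powS n (pXZ j)) (powS n (qXZ j))
      (fun x => κ x m) (fun x => κ x m))
    (fun j => Gexp (pXZ j.castSucc) (qXZ j.castSucc) (pXZ j.succ) (qXZ j.succ) R)
    (fun j => step (Src.of (hpXZ _) (hqXZ _) (hpXZ _) (hqXZ _)
      ((hmargP _).trans (hmargP _).symm) (hfinZ _) (hfinZ _))
      ((hmargQ _).trans (hmargQ _).symm) R hR n hn κ hκ)
  rw [klDiv_pow hqXY.1 (klDiv_ac hfinY) n _ κ hκ, ← EReal.coe_mul, add_assoc]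
  refine s0.trans (add_le_add_right (s1.trans (add_le_add_right ?_ _)) _)
  refine le_sSup ⟨n, hn, κ, hκ, ?_⟩
  rw [klDiv_pow (hqXZ _).1 (klDiv_ac (hfinZ _)) n _ κ hκ, ← EReal.coe_mul]

end
end
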